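/- For n = 32 and every q ≤ 1966: the word w contains no factor v having a kernel period q such that 31(|v|+1) ≥ 32q − 3. (Remark R1.) -/

import Mathlib

/-- The four-letter alphabet `A₄ = {1,2,3,4}`; the value `k : Fin 4` represents letter `k+1`. -/
abbrev A4 := Fin 4

/-- The morphism `f` on letters: `f(1)=121, f(2)=123, f(3)=141, f(4)=142`
(letters `1,2,3,4` encoded as `0,1,2,3`). -/
def fm : A4 → List A4
  | 0 => [0, 1, 0]
  | 1 => [0, 1, 2]
  | 2 => [0, 3, 0]
  | 3 => [0, 3, 1]

/-- The morphism `f` extended to words by concatenation. -/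
def fw (u : List A4) : List A4 := u.flatMap fm

/-- The fixed point `w` of `f` starting with the letter `1`: since `|f^k(1)| = 3^k` and each
`f^k(1)` is a prefix of `f^(k+1)(1)`, the `n`-th letter of `w` is the `n`-th letter of
`f^(n+1)(1)`. -/
def w (n : ℕ) : A4 := ((fw^[n + 1]) [0]).getD n 0

/-- The finite word `t` occurs at position `i` in the infinite word `x`. -/
def OccursAt {α : Type*} (t : List α) (x : ℕ → α) (i : ℕ) : Prop :=
  t = (List.range t.length).map fun k => x (i + k)

/-- The finite word `v` is a factor of the infinite word `x`. -/
def FactorOf {α : Type*} (v : List α) (x : ℕ → α) : Prop :=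
  ∃ i, OccursAt v x i

/-- The finite word `v` has period `q ≥ 1`: `v(j) = v(j+q)` whenever `0 ≤ j < |v| - q`. -/
def HasPeriod {α : Type*} (v : List α) (q : ℕ) : Prop :=
  1 ≤ q ∧ ∀ j, j + q < v.length → v[j]? = v[j + q]?

/-- A word lies in `ker ψ` if each letter of `A₄` occurs in it a number of times
divisible by `4`. -/
def InKerPsi (u : List A4) : Prop := ∀ a : A4, 4 ∣ u.count a

/-- `q` is a kernel period of `v`: `1 ≤ q ≤ |v|`, `v` has period `q`, and the prefix of `v`
of length `q` lies in `ker ψ`. -/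
def KernelPeriod (v : List A4) (q : ℕ) : Prop :=
  q ≤ v.length ∧ HasPeriod v q ∧ InKerPsi (v.take q)

/-! ### Letters of the fixed point -/

/-- Second letter of `f(a)`. -/
def h1 : A4 → A4
  | 0 => 1
  | 1 => 1
  | 2 => 3
  | 3 => 3

/-- Third letter of `f(a)`. -/
def h2 : A4 → A4
  | 0 => 0
  | 1 => 2
  | 2 => 0
  | 3 => 1

lemma fm_eq (a : A4) : fm a = [0, h1 a, h2 a] := by
  fin_cases a <;> rfl

lemma fw_cons (a : A4) (u : List A4) : fw (a :: u) = 0 :: h1 a :: h2 a :: fw u := by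
  simp [fw, fm_eq]

lemma fw_length (u : List A4) : (fw u).length = 3 * u.length := by
  induction u with
  | nil => rfl
  | cons a u ih => rw [fw_cons]; simp [ih]; ring

lemma fw_iter_length (k : ℕ) (u : List A4) : (fw^[k] u).length = 3 ^ k * u.length := by
  induction k with
  | zero => simp
  | succ k ih => rw [Function.iterate_succ_apply', fw_length, ih]; ring

lemma fw_get (u : List A4) : ∀ m, m < u.length →
    (fw u).getD (3 * m) 0 = 0 ∧ (fw u).getD (3 * m + 1) 0 = h1 (u.getD m 0) ∧
    (fw u).getD (3 * m + 2) 0 = h2 (u.getD m 0) := by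
  induction u with
  | nil => intro m hm; simp at hm
  | cons a u ih =>
    intro m hm
    rw [fw_cons]
    cases m with
    | zero => simp
    | succ m =>
      have := ih m (by simpa using hm)
      have e1 : 3 * (m + 1) = 3 * m + 1 + 1 + 1 := by ring
      have e2 : 3 * (m + 1) + 1 = 3 * m + 1 + 1 + 1 + 1 := by ring
      have e3 : 3 * (m + 1) + 2 = 3 * m + 2 + 1 + 1 + 1 := by ring
      rw [e2, e3, e1]
      simpa only [List.getD_cons_succ] using this

lemma fw_append (u v : List A4) : fw (u ++ v) = fw u ++ fw v := by
  simp [fw]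

lemma iter_prefix_succ (k : ℕ) : fw^[k] [0] <+: fw^[k + 1] [0] := by
  induction k with
  | zero => exact ⟨[1, 0], rfl⟩
  | succ k ih =>
    obtain ⟨t, ht⟩ := ih
    refine ⟨fw t, ?_⟩
    have e := congrArg fw ht
    rw [fw_append, ← Function.iterate_succ_apply' fw, ← Function.iterate_succ_apply' fw] at e
    exact e

lemma iter_prefix (k d : ℕ) : fw^[k] [0] <+: fw^[k + d] [0] := by
  induction d with
  | zero => exact List.prefix_refl _
  | succ d ih => exact ih.trans (iter_prefix_succ (k + d))

lemma getD_of_prefix {u v : List A4} (h : u <+: v) {n : ℕ} (hn : n < u.length) :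
    v.getD n 0 = u.getD n 0 := by
  obtain ⟨t, rfl⟩ := h
  rw [List.getD_append _ _ _ _ hn]

lemma w_eq (n k : ℕ) (h : n < 3 ^ k) : w n = (fw^[k] [0]).getD n 0 := by
  have hn : n < 3 ^ (n + 1) :=
    lt_of_lt_of_le (Nat.lt_pow_self (by norm_num)) (Nat.pow_le_pow_right (by norm_num) (Nat.le_succ n))
  unfold w
  rcases le_total (n + 1) k with hk | hk
  · obtain ⟨d, rfl⟩ := Nat.exists_eq_add_of_le hk
    exact (getD_of_prefix (iter_prefix _ _) (by rw [fw_iter_length]; simpa using hn)).symm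
  · obtain ⟨d, hd⟩ := Nat.exists_eq_add_of_le hk
    rw [hd]
    exact getD_of_prefix (iter_prefix _ _) (by rw [fw_iter_length]; simpa using h)

lemma w_block (m : ℕ) : w (3 * m) = 0 ∧ w (3 * m + 1) = h1 (w m) ∧ w (3 * m + 2) = h2 (w m) := by
  have hm : m < 3 ^ m := Nat.lt_pow_self (by norm_num)
  have hs : 3 ^ (m + 1) = 3 * 3 ^ m := by ring
  rw [w_eq (3 * m) (m + 1) (by omega), w_eq (3 * m + 1) (m + 1) (by omega),
    w_eq (3 * m + 2) (m + 1) (by omega), w_eq m m hm, Function.iterate_succ_apply']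
  exact fw_get _ m (by rw [fw_iter_length]; simpa using hm)

lemma w0 (m : ℕ) : w (3 * m) = 0 := (w_block m).1
lemma w1 (m : ℕ) : w (3 * m + 1) = h1 (w m) := (w_block m).2.1
lemma w2 (m : ℕ) : w (3 * m + 2) = h2 (w m) := (w_block m).2.2

lemma h1_ne (a : A4) : h1 a ≠ 0 := by revert a; decide
lemma h_inj : ∀ a b : A4, h1 a = h1 b → h2 a = h2 b → a = b := by decide

/-- Letters of the image of the pair of letters at positions `m`, `m+1`. -/
lemma w_pair (m k : ℕ) : ∀ t, t < 2 * 3 ^ k →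
    w (3 ^ k * m + t) = (fw^[k] [w m, w (m + 1)]).getD t 0 := by
  induction k with
  | zero =>
    intro t ht
    have : t = 0 ∨ t = 1 := by omega
    rcases this with rfl | rfl <;> simp
  | succ k ih =>
    intro t ht
    have hs : 3 ^ (k + 1) = 3 * 3 ^ k := by ring
    have ht' : t / 3 < 2 * 3 ^ k := by omega
    have e := ih (t / 3) ht'
    have g := fw_get (fw^[k] [w m, w (m + 1)]) (t / 3)
      (by rw [fw_iter_length]; simp; omega)
    rw [← e] at g
    rw [Function.iterate_succ_apply']
    have hp : 3 ^ (k + 1) * m + t = 3 * (3 ^ k * m + t / 3) + t % 3 := by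
      have : 3 ^ (k + 1) * m = 3 * (3 ^ k * m) := by ring
      omega
    rw [hp]
    have hr : t % 3 = 0 ∨ t % 3 = 1 ∨ t % 3 = 2 := by omega
    rcases hr with hr | hr | hr
    · rw [hr, Nat.add_zero, w0, show t = 3 * (t / 3) by omega, g.1]
    · rw [hr, w1, ← g.2.1]; congr 1; omega
    · rw [hr, w2, ← g.2.2]; congr 1; omega

/-- The two-letter factors. -/
def pairs : List (A4 × A4) :=
  [(0, 1), (1, 0), (0, 0), (1, 2), (2, 0), (0, 3), (3, 0), (3, 1)]

lemma pairs_mem (m : ℕ) : (w m, w (m + 1)) ∈ pairs := by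
  have hr : m % 3 = 0 ∨ m % 3 = 1 ∨ m % 3 = 2 := by omega
  have key : ∀ a : A4, (0, h1 a) ∈ pairs ∧ (h1 a, h2 a) ∈ pairs ∧ (h2 a, 0) ∈ pairs := by decide
  rcases hr with hr | hr | hr
  · rw [show m = 3 * (m / 3) by omega, w0, w1]; exact (key _).1
  · rw [show m = 3 * (m / 3) + 1 by omega, w1, w2]; exact (key _).2.1
  · rw [show m = 3 * (m / 3) + 2 by omega, w2, show 3 * (m / 3) + 2 + 1 = 3 * (m / 3 + 1) by ring, w0]
    exact (key _).2.2

/-! ### Prefix counts and kernel repetitions -/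

/-- Number of occurrences of `a` among the first `n` letters of `w`. -/
def P (a : A4) (n : ℕ) : ℕ := Nat.count (fun k => w k = a) n

lemma P_succ (a : A4) (n : ℕ) : P a (n + 1) = P a n + if w n = a then 1 else 0 :=
  Nat.count_succ _ _

lemma P_three (m : ℕ) :
    P 0 (3 * m) = 2 * P 0 m + P 1 m + 2 * P 2 m + P 3 m ∧
    P 1 (3 * m) = P 0 m + P 1 m + P 3 m ∧
    P 2 (3 * m) = P 1 m ∧
    P 3 (3 * m) = P 2 m + P 3 m := by
  induction m with
  | zero => simp [P]
  | succ m ih =>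
    rw [show 3 * (m + 1) = 3 * m + 2 + 1 by ring]
    simp only [P_succ, show 3 * m + 2 = 3 * m + 1 + 1 by ring]
    rw [show 3 * m + 1 + 1 = 3 * m + 2 by ring, w0, w1, w2]
    obtain ⟨i0, i1, i2, i3⟩ := ih
    rw [i0, i1, i2, i3]
    generalize w m = a
    fin_cases a <;> simp [h1, h2] <;> omega

lemma P_mono (a : A4) (n q : ℕ) : P a n ≤ P a (n + q) ∧ P a (n + q) ≤ P a n + q := by
  induction q with
  | zero => simp
  | succ q ih => rw [← Nat.add_assoc, P_succ]; split_ifs <;> omega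

lemma P_sum (n : ℕ) : P 0 n + P 1 n + P 2 n + P 3 n = n := by
  induction n with
  | zero => simp [P]
  | succ n ih =>
    simp only [P_succ]
    generalize w n = a
    fin_cases a <;> simp <;> omega

/-- A kernel repetition of period `q` and excess `l` at position `i`. -/
def K (q l i : ℕ) : Prop :=
  (∀ a, P a (i + q) % 4 = P a i % 4) ∧ ∀ k, k < l → w (i + k) = w (i + q + k)

lemma K_mono {q l l' i : ℕ} (h : K q l i) (hl : l' ≤ l) : K q l' i :=
  ⟨h.1, fun k hk => h.2 k (lt_of_lt_of_le hk hl)⟩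

lemma K_four {q l i : ℕ} (h : K q l i) : q % 4 = 0 := by
  have a0 := h.1 0
  have a1 := h.1 1
  have a2 := h.1 2
  have a3 := h.1 3
  have s := P_sum i
  have t := P_sum (i + q)
  omega

lemma sync {q l i : ℕ} (h : K q l i) (hl : 3 ≤ l) : q % 3 = 0 := by
  -- a position congruent to 0 cannot match a position congruent to 1
  have no : ∀ x y, x % 3 = 0 → y % 3 = 1 → w x ≠ w y := by
    intro x y hx hy
    rw [show x = 3 * (x / 3) by omega, show y = 3 * (y / 3) + 1 by omega, w0, w1]
    exact (h1_ne _).symm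
  by_contra hq
  have hq' : q % 3 = 1 ∨ q % 3 = 2 := by omega
  rcases hq' with hq' | hq'
  · have e := h.2 ((3 - i % 3) % 3) (by omega)
    exact no _ _ (by omega) (by omega) e
  · have e := h.2 ((4 - i % 3) % 3) (by omega)
    exact no _ _ (by omega) (by omega) e.symm

/-- Desubstitution at an aligned position. -/
lemma desub {q i l : ℕ} (hP : ∀ a, P a (3 * i + 3 * q) % 4 = P a (3 * i) % 4)
    (hw : ∀ k, k < l → w (3 * (i + k) + 1) = w (3 * (i + q + k) + 1) ∧
      w (3 * (i + k) + 2) = w (3 * (i + q + k) + 2)) : K q l i := by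
  constructor
  · have a0 := hP 0
    have a1 := hP 1
    have a2 := hP 2
    have a3 := hP 3
    rw [← Nat.mul_add] at a0 a1 a2 a3
    obtain ⟨b0, b1, b2, b3⟩ := P_three i
    obtain ⟨c0, c1, c2, c3⟩ := P_three (i + q)
    rw [b0, c0] at a0
    rw [b1, c1] at a1
    rw [b2, c2] at a2
    rw [b3, c3] at a3
    intro a
    fin_cases a <;> simp only [Fin.zero_eta, Fin.mk_one, Fin.reduceFinMk] <;> omega
  · intro k hk
    obtain ⟨e1, e2⟩ := hw k hk
    rw [w1, w1] at e1
    rw [w2, w2] at e2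
    exact h_inj _ _ e1 e2

lemma reduce {q l i : ℕ} (h : K q l i) (hl : 3 ≤ l) :
    ∃ i', K (q / 3) ((l - 1) / 3) i' := by
  have hq := sync h hl
  obtain ⟨p, rfl⟩ : ∃ p, q = 3 * p := ⟨q / 3, by omega⟩
  rw [show 3 * p / 3 = p by omega]
  have hr : i % 3 = 0 ∨ i % 3 = 1 ∨ i % 3 = 2 := by omega
  have use : ∀ x y, i ≤ x → x < i + l → y = x + 3 * p → w x = w y := by
    intro x y h1 h2 h3
    have e := h.2 (x - i) (by omega)
    rw [show i + (x - i) = x by omega, show i + 3 * p + (x - i) = y by omega] at e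
    exact e
  rcases hr with hr | hr | hr
  · obtain ⟨j, rfl⟩ : ∃ j, i = 3 * j := ⟨i / 3, by omega⟩
    exact ⟨j, desub h.1 fun k hk =>
      ⟨use _ _ (by omega) (by omega) (by ring), use _ _ (by omega) (by omega) (by ring)⟩⟩
  · obtain ⟨j, rfl⟩ : ∃ j, i = 3 * j + 1 := ⟨i / 3, by omega⟩
    refine ⟨j, desub (fun a => ?_) fun k hk =>
      ⟨use _ _ (by omega) (by omega) (by ring), use _ _ (by omega) (by omega) (by ring)⟩⟩
    have e := h.1 a
    rw [show 3 * j + 1 + 3 * p = 3 * (j + p) + 1 by ring, P_succ, P_succ, w0, w0] at e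
    rw [← Nat.mul_add]
    split_ifs at e <;> omega
  · obtain ⟨j, rfl⟩ : ∃ j, i = 3 * j + 2 := ⟨i / 3, by omega⟩
    refine ⟨j + 1, desub (fun a => ?_) fun k hk =>
      ⟨use _ _ (by omega) (by omega) (by ring), use _ _ (by omega) (by omega) (by ring)⟩⟩
    have e := h.1 a
    have e2 := h.2 0 (by omega)
    simp only [Nat.add_zero] at e2
    rw [show 3 * (j + 1) + 3 * p = 3 * j + 2 + 3 * p + 1 by ring,
      show 3 * (j + 1) = 3 * j + 2 + 1 by ring, P_succ, P_succ, ← e2]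
    split_ifs <;> omega

/-! ### Direct verification for small periods -/

/-- Weight of a letter in the packed count. -/
def wt : A4 → ℕ
  | 0 => 0
  | 1 => 1
  | 2 => 4096
  | 3 => 16777216

/-- Packed prefix count. -/
def D (n : ℕ) : ℕ := P 1 n + 4096 * P 2 n + 16777216 * P 3 n

lemma D_succ (n : ℕ) : D (n + 1) = D n + wt (w n) := by
  unfold D
  simp only [P_succ]
  generalize w n = a
  fin_cases a <;> simp [wt] <;> ring

/-- Are all packed counts divisible by 4? -/
def test (d : ℕ) : Bool :=
  Nat.beq (d % 4) 0 && (Nat.beq (d / 4096 % 4) 0 && Nat.beq (d / 16777216 % 4) 0)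

/-- Do the first `n` letters agree? -/
def eqp : ℕ → List A4 → List A4 → Bool
  | 0, _, _ => true
  | n + 1, a :: u, b :: v => Nat.beq a.val b.val && eqp n u v
  | _ + 1, _, _ => false

/-- Slide along two lists; `d` is the packed count of the part between them. -/
def go (l : ℕ) : List A4 → List A4 → ℕ → Bool
  | u :: U, v :: V, d =>
    !(test d && eqp l (u :: U) (v :: V)) && go l U V (d + wt v - wt u)
  | _, _, _ => true

/-- Packed count of a list. -/
def packed : List A4 → ℕ
  | [] => 0
  | a :: u => wt a + packed u

/-- Check one image of a pair. -/
def checkList (q l : ℕ) (T : List A4) : Bool :=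
  go l T (T.drop q) (packed (T.take q))

/-- Check period `q` with excess `l` on the `k`-th images of all pairs. -/
def checkBase (q l k : ℕ) : Bool :=
  pairs.all fun p => checkList q l (fw^[k] [p.1, p.2])

lemma eqp_true : ∀ (l : ℕ) (U V : List A4), l ≤ U.length → l ≤ V.length →
    (∀ k, k < l → U.getD k 0 = V.getD k 0) → eqp l U V = true
  | 0, _, _, _, _, _ => by simp [eqp]
  | n + 1, [], _, h, _, _ => by simp at h
  | n + 1, _ :: _, [], _, h, _ => by simp at h
  | n + 1, a :: u, b :: v, h, h', e => by
    have e0 : a = b := by simpa using e 0 (by omega)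
    have ih := eqp_true n u v (by simpa using h) (by simpa using h') fun k hk => by
      simpa using e (k + 1) (by omega)
    simp [eqp, e0, ih]

lemma test_true {q l j d : ℕ} (hq : q < 4096) (hd : d + D j = D (j + q)) (h : K q l j) :
    test d = true := by
  have a1 := h.1 1
  have a2 := h.1 2
  have a3 := h.1 3
  have m1 := P_mono 1 j q
  have m2 := P_mono 2 j q
  have m3 := P_mono 3 j q
  unfold D at hd
  have t1 : d % 4 = 0 := by omega
  have t2 : d / 4096 % 4 = 0 := by omega
  have t3 : d / 16777216 % 4 = 0 := by omega
  simp [test, t1, t2, t3]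

lemma go_sound (q l : ℕ) (hq : q < 4096) : ∀ (V U : List A4) (d j : ℕ), V.length ≤ U.length →
    (∀ t, t < U.length → U.getD t 0 = w (j + t)) →
    (∀ t, t < V.length → V.getD t 0 = w (j + q + t)) →
    d + D j = D (j + q) → go l U V d = true →
    ∀ r, r < V.length → r + l ≤ V.length → ¬ K q l (j + r)
  | [], _, _, _, _, _, _, _, _ => by intro r hr; simp at hr
  | _ :: _, [], _, _, h, _, _, _, _ => by simp at h
  | v :: V, u :: U, d, j, hlen, hU, hV, hd, hgo => by
    intro r hr hrl hK
    simp only [go, Bool.and_eq_true, Bool.not_eq_true'] at hgo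
    have hu : u = w j := by simpa using hU 0 (by simp)
    have hv : v = w (j + q) := by simpa using hV 0 (by simp)
    cases r with
    | zero =>
      rw [Nat.add_zero] at hK
      have e := eqp_true l (u :: U) (v :: V) (by omega) (by omega) fun k hk => by
        rw [hU k (by omega), hV k (by omega)]; exact hK.2 k hk
      rw [test_true hq hd hK, e] at hgo
      simp at hgo
    | succ r =>
      have s1 := D_succ j
      have s2 := D_succ (j + q)
      rw [← hu] at s1
      rw [← hv] at s2
      have m1 := P_mono 1 (j + 1) q
      have m2 := P_mono 2 (j + 1) q
      have m3 := P_mono 3 (j + 1) q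
      have hm : D (j + 1) ≤ D (j + 1 + q) := by unfold D; omega
      have hc : j + 1 + q = j + q + 1 := by ring
      refine go_sound q l hq V U (d + wt v - wt u) (j + 1) (by simpa using hlen) ?_ ?_ ?_ hgo.2 r
        (by simpa using hr) (by simp at hrl; omega) ?_
      · intro t ht
        have := hU (t + 1) (by simpa using ht)
        rw [List.getD_cons_succ] at this
        rw [this]; congr 1; ring
      · intro t ht
        have := hV (t + 1) (by simpa using ht)
        rw [List.getD_cons_succ] at this
        rw [this]; congr 1; ring
      · rw [hc] at hm ⊢; omega
      · rwa [show j + 1 + r = j + (r + 1) by ring]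

lemma packed_eq : ∀ (T : List A4) (j : ℕ), (∀ t, t < T.length → T.getD t 0 = w (j + t)) →
    packed T + D j = D (j + T.length)
  | [], _, _ => by simp [packed]
  | a :: T, j, h => by
    have ha : a = w j := by simpa using h 0 (by simp)
    have ih := packed_eq T (j + 1) fun t ht => by
      have := h (t + 1) (by simpa using ht)
      rw [List.getD_cons_succ] at this
      rw [this]; congr 1; ring
    rw [D_succ, ← ha] at ih
    rw [packed, List.length_cons, show j + (T.length + 1) = j + 1 + T.length by ring, ← ih]
    ring

lemma base_sound {q l k : ℕ} (hq : q < 4096) (hk : q + l ≤ 3 ^ k) (hc : checkBase q l k = true)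
    (i : ℕ) : ¬ K q l i := by
  have hpos : 0 < 3 ^ k := by positivity
  set m := i / 3 ^ k with hm
  have hi : i = 3 ^ k * m + i % 3 ^ k := (Nat.div_add_mod i (3 ^ k)).symm
  have hr : i % 3 ^ k < 3 ^ k := Nat.mod_lt _ hpos
  have hc' : checkList q l (fw^[k] [w m, w (m + 1)]) = true :=
    List.all_eq_true.mp hc _ (pairs_mem m)
  have hT := w_pair m k
  have hlen : (fw^[k] [w m, w (m + 1)]).length = 2 * 3 ^ k := by
    rw [fw_iter_length]; simp; ring
  generalize fw^[k] [w m, w (m + 1)] = T at hc' hT hlen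
  rw [hi]
  have hd := packed_eq (T.take q) (3 ^ k * m) (by
    intro t ht
    rw [List.length_take] at ht
    rw [hT t (by omega), List.getD_eq_getElem?_getD, List.getD_eq_getElem?_getD,
      List.getElem?_take_of_lt (by omega)])
  rw [List.length_take, hlen, Nat.min_eq_left (by omega)] at hd
  refine go_sound q l hq (T.drop q) T _ (3 ^ k * m) ?_ ?_ ?_ hd hc' _ ?_ ?_
  · simp
  · intro t ht
    rw [hT t (by omega)]
  · intro t ht
    rw [List.length_drop] at ht
    rw [Nat.add_assoc, hT (q + t) (by omega), List.getD_eq_getElem?_getD,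
      List.getD_eq_getElem?_getD, List.getElem?_drop]
  · rw [List.length_drop]; omega
  · rw [List.length_drop]; omega

/-- Periods, excesses and exponents verified directly. -/
def baseList : List (ℕ × ℕ × ℕ) :=
  [(4, 0, 4), (8, 0, 4), (12, 0, 4), (16, 0, 4), (20, 0, 4), (24, 0, 4), (28, 0, 4), (32, 0, 4),
   (36, 0, 4), (40, 1, 4), (44, 1, 4), (48, 0, 4), (52, 1, 4), (56, 0, 4), (60, 0, 4),
   (64, 0, 4), (68, 2, 4), (72, 1, 4), (76, 1, 4), (80, 2, 5), (84, 0, 5), (88, 1, 5),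
   (92, 0, 5), (96, 0, 5), (100, 0, 5), (120, 2, 5), (132, 3, 5), (204, 6, 5), (312, 9, 6)]

set_option maxRecDepth 100000 in
lemma baseList_check : (baseList.all fun p => checkBase p.1 p.2.1 p.2.2) = true := by
  decide +kernel

lemma baseList_size : ∀ p ∈ baseList, p.1 < 4096 ∧ p.1 + p.2.1 ≤ 3 ^ p.2.2 := by
  decide +kernel

/-- Decision procedure combining desubstitution with the direct verification. -/
def chk : ℕ → ℕ → ℕ → Bool
  | 0, _, _ => false
  | n + 1, q, l =>
    (baseList.any fun p => Nat.beq p.1 q && Nat.ble p.2.1 l) ||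
    (Nat.ble 3 l && (!Nat.beq (q % 3) 0 || chk n (q / 3) ((l - 1) / 3)))

lemma chk_sound : ∀ (n q l : ℕ), chk n q l = true → ∀ i, ¬ K q l i
  | 0, _, _, h => by simp [chk] at h
  | n + 1, q, l, h => by
    intro i hK
    simp only [chk, Bool.or_eq_true, Bool.and_eq_true, List.any_eq_true, Nat.beq_eq,
      Nat.ble_eq, Bool.not_eq_true'] at h
    rcases h with ⟨p, hp, rfl, hl⟩ | ⟨hl, h | h⟩
    · have hs := baseList_size p hp
      exact base_sound hs.1 hs.2 (List.all_eq_true.mp baseList_check p hp) i (K_mono hK hl)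
    · have hs := sync hK hl
      rw [hs] at h
      simp at h
    · obtain ⟨i', hK'⟩ := reduce hK hl
      exact chk_sound n _ _ h i' hK'

lemma chk_all : ∀ p < 491, chk 4 (4 * (p + 1)) ((4 * (p + 1) - 4) / 31) = true := by
  decide +kernel

lemma no_K {q l i : ℕ} (h1 : 1 ≤ q) (hq : q ≤ 1966) (hl : (q - 4) / 31 ≤ l) : ¬ K q l i := by
  intro hK
  have h4 := K_four hK
  have hc := chk_all (q / 4 - 1) (by omega)
  rw [show 4 * (q / 4 - 1 + 1) = q by omega] at hc
  exact chk_sound _ _ _ hc i (K_mono hK hl)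

lemma count_seg (a : A4) (i q : ℕ) :
    P a (i + q) = P a i + ((List.range q).map fun k => w (i + k)).count a := by
  induction q with
  | zero => simp
  | succ q ih =>
    rw [← Nat.add_assoc, P_succ, ih, List.range_succ, List.map_append, List.count_append]
    simp [List.count_singleton, Nat.add_assoc]

/-- Remark R1 (for `n = 32`): for every `q ≤ 1966`, `w` contains no factor `v` having kernel
period `q` such that `31(|v|+1) ≥ 32q - 3`. -/
theorem stmt4 (q : ℕ) (hq : q ≤ 1966) :
    ¬ ∃ v : List A4, FactorOf v w ∧ KernelPeriod v q ∧
      (31 : ℤ) * (v.length + 1) ≥ 32 * (q : ℤ) - 3 := by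
  rintro ⟨v, ⟨i, hi⟩, ⟨hqv, ⟨h1, hper⟩, hker⟩, hlen⟩
  unfold OccursAt at hi
  have hget : ∀ t, t < v.length → v[t]? = some (w (i + t)) := by
    intro t ht
    rw [hi]
    simp [ht]
  refine no_K (q := q) (l := v.length - q) (i := i) h1 hq (by omega) ⟨?_, ?_⟩
  · intro a
    have hc := hker a
    rw [hi, ← List.map_take, List.take_range, Nat.min_eq_left hqv] at hc
    rw [count_seg]
    omega
  · intro k hk
    have e := hper k (by omega)
    rw [hget k (by omega), hget (k + q) (by omega)] at e
    rw [Nat.add_assoc, Nat.add_comm q k]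
    exact Option.some.inj e
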